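/- Set ω₁ = y⁴dx − x⁴dy, ω₂ = y³(2x−y)dx + x³(x−2y)dy, ω₃ = y²(6x²+4xy+y²)dx − x³(x+4y)dy, ω₄ = y³(4x+y)dx + x³(x+4y)dy, ω₅ = y²(6x²+4xy+y²)dx + 3x⁴dy, with coefficient pairs (A_i, B_i). Then each pair (A_i, B_i) is coprime, and the following polynomial identities hold: D₁ = 16x³y³ and C₁ = xy(y³−x³); D₂ = −24x²y²(x−y)² and C₂ = xy(x−y)(x²−xy+y²); D₃ = 48x²y(x+y)³ and C₃ = xy(x+y)(y²+3xy−x²); D₄ = −48x²y²(x²+3xy+y²) and C₄ = xy(x+y)(x²+3xy+y²); D₅ = −48x³y(3x²+3xy+y²) and C₅ = xy(x+y)(3x²+3xy+y²), where D_i = (∂A_i/∂x)(∂B_i/∂y) − (∂A_i/∂y)(∂B_i/∂x) and C_i = xA_i + yB_i. In particular, every linear factor of D_i divides C_i, so each ω_i defines a convex homogeneous foliation of degree 4; their types are respectively 2·R₃, 3·R₂, 1·R₁+1·R₂+1·R₃, 2·R₁+2·R₂, 3·R₁+1·R₃. -/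

import Mathlib

open MvPolynomial

noncomputable section

/-- Polynomials in two variables `x = X 0`, `y = X 1` over `ℂ`. -/
abbrev P2 : Type := MvPolynomial (Fin 2) ℂ

/-- The inflection polynomial `D_ω = A_x B_y - A_y B_x` of `ω = A dx + B dy`. -/
def Dpoly (A B : P2) : P2 :=
  pderiv 0 A * pderiv 1 B - pderiv 1 A * pderiv 0 B

/-- The tangent cone `C_ω = xA + yB` of `ω = A dx + B dy`. -/
def Cpoly (A B : P2) : P2 := X 0 * A + X 1 * B

/-- `A` and `B` have no common (non-unit) factor. -/
def NoCommonFactor (A B : P2) : Prop := ∀ p : P2, p ∣ A → p ∣ B → IsUnit p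

/-- Convexity: every linear factor of `D_ω` divides `C_ω`. -/
def IsConvexPair (A B : P2) : Prop :=
  ∀ l : P2, l.IsHomogeneous 1 → l ≠ 0 → l ∣ Dpoly A B → l ∣ Cpoly A B

/-- Composition of a polynomial with the linear map `φ(x,y) = (a₁x + a₂y, a₃x + a₄y)`. -/
def comp2 (a₁ a₂ a₃ a₄ : ℂ) (p : P2) : P2 :=
  aeval ![C a₁ * X 0 + C a₂ * X 1, C a₃ * X 0 + C a₄ * X 1] p

/-- `ω = A dx + B dy` is linearly conjugate to `ω' = A' dx + B' dy`:
`φ*ω = λ ω'` for some `φ ∈ GL₂(ℂ)` and `λ ∈ ℂ \ {0}`. -/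
def LinConj (A B A' B' : P2) : Prop :=
  ∃ a₁ a₂ a₃ a₄ lam : ℂ, a₁ * a₄ - a₂ * a₃ ≠ 0 ∧ lam ≠ 0 ∧
    C a₁ * comp2 a₁ a₂ a₃ a₄ A + C a₃ * comp2 a₁ a₂ a₃ a₄ B = C lam * A' ∧
    C a₂ * comp2 a₁ a₂ a₃ a₄ A + C a₄ * comp2 a₁ a₂ a₃ a₄ B = C lam * B'

/-- ω₁ = y⁴dx − x⁴dy -/
def A1 : P2 := X 1 ^ 4
def B1 : P2 := -X 0 ^ 4
/-- ω₂ = y³(2x−y)dx + x³(x−2y)dy -/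
def A2 : P2 := X 1 ^ 3 * (2 * X 0 - X 1)
def B2 : P2 := X 0 ^ 3 * (X 0 - 2 * X 1)
/-- ω₃ = y²(6x²+4xy+y²)dx − x³(x+4y)dy -/
def A3 : P2 := X 1 ^ 2 * (6 * X 0 ^ 2 + 4 * X 0 * X 1 + X 1 ^ 2)
def B3 : P2 := -(X 0 ^ 3 * (X 0 + 4 * X 1))
/-- ω₄ = y³(4x+y)dx + x³(x+4y)dy -/
def A4 : P2 := X 1 ^ 3 * (4 * X 0 + X 1)
def B4 : P2 := X 0 ^ 3 * (X 0 + 4 * X 1)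
/-- ω₅ = y²(6x²+4xy+y²)dx + 3x⁴dy -/
def A5 : P2 := X 1 ^ 2 * (6 * X 0 ^ 2 + 4 * X 0 * X 1 + X 1 ^ 2)
def B5 : P2 := 3 * X 0 ^ 4


/-- Two polynomials are proportional (one is a constant multiple of the other). -/
def Proportional (l₁ l₂ : P2) : Prop := ∃ t : ℂ, l₁ = C t * l₂ ∨ l₂ = C t * l₁

/-- A convex homogeneous foliation given by `ω = A dx + B dy` has type
`Σₖ rₖ · Rₖ`, encoded by the list `ks` of the exponents `kᵢ`, if
`D_ω = c · ∏ᵢ ℓᵢ^{kᵢ}` for some `c ≠ 0` and pairwise non-proportional linear forms `ℓᵢ`,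
each dividing `C_ω`. -/
def HasType (A B : P2) (ks : List ℕ) : Prop :=
  ∃ c : ℂ, c ≠ 0 ∧ ∃ L : Fin ks.length → P2,
    (∀ i, (L i).IsHomogeneous 1 ∧ L i ≠ 0 ∧ L i ∣ Cpoly A B) ∧
    (∀ i j, i ≠ j → ¬ Proportional (L i) (L j)) ∧
    Dpoly A B = C c * ∏ i, (L i) ^ (ks.get i)

/-!
All five forms belong to the family `y²(a·x² + b·xy + c·y²) dx + x³(d·x + e·y) dy`, whose inflection
polynomial is computed once for all coefficients. As `B` is a product of linear forms, `A` and `B`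
are coprime as soon as `A` does not vanish at the zeros of these forms. The types are read off from
a factorization of `D_ω` into linear forms dividing `C_ω`; convexity follows from it, since a linear
form is prime and so a linear factor of `D_ω` divides one of the forms of the factorization.
-/

theorem prime_of_isHomogeneous_one {σ K : Type*} [Field K] {l : MvPolynomial σ K}
    (hl : l.IsHomogeneous 1) (h0 : l ≠ 0) : Prime l := by
  rw [← UniqueFactorizationMonoid.irreducible_iff_prime]
  refine irreducible_of_totalDegree_eq_one (hl.totalDegree h0) fun x hx ↦ ?_
  rw [isUnit_iff_ne_zero]
  rintro rfl
  exact h0 (MvPolynomial.ext _ _ fun m ↦ by simpa using hx m)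

theorem isRelPrime_of_eval_ne_zero {σ R : Type*} [CommSemiring R]
    {l p : MvPolynomial σ R} (hl : Irreducible l) {v : σ → R} (hlv : eval v l = 0)
    (hpv : eval v p ≠ 0) : IsRelPrime l p := by
  refine hl.isRelPrime_iff_not_dvd.mpr ?_
  rintro ⟨q, rfl⟩
  simp [hlv] at hpv

theorem exists_ne_add_eq_mul_eq {K : Type*} [Field K] [IsAlgClosed K] [NeZero (2 : K)] {p q : K}
    (hdisc : p ^ 2 - 4 * q ≠ 0) : ∃ a b : K, a ≠ b ∧ a + b = p ∧ a * b = q := by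
  obtain ⟨a, ha⟩ := exists_quadratic_eq_zero (one_ne_zero (α := K))
    (IsAlgClosed.exists_eq_mul_self (discrim 1 (-p) q))
  obtain ⟨b, -, hadd, hmul⟩ := vieta_formula_quadratic (b := p) (c := q) (x := a)
    (by linear_combination ha)
  refine ⟨a, b, ?_, hadd, hmul⟩
  rintro rfl
  exact hdisc (by rw [← hadd, ← hmul]; ring)

theorem exists_binary_quadratic_eq_mul {σ K : Type*} [Field K] [IsAlgClosed K] [NeZero (2 : K)]
    {p q : K} (hq : q ≠ 0) (hdisc : p ^ 2 - 4 * q ≠ 0) :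
    ∃ a b : K, a ≠ 0 ∧ b ≠ 0 ∧ a ≠ b ∧ ∀ s t : MvPolynomial σ K,
      s ^ 2 + C p * s * t + C q * t ^ 2 = (s + C a * t) * (s + C b * t) := by
  obtain ⟨a, b, hab, rfl, rfl⟩ := exists_ne_add_eq_mul_eq hdisc
  refine ⟨a, b, left_ne_zero_of_mul hq, right_ne_zero_of_mul hq, hab, fun s t ↦ ?_⟩
  rw [C_add, C_mul]
  ring

theorem HasType.isConvexPair {A B : P2} {ks : List ℕ} (h : HasType A B ks) :
    IsConvexPair A B := by
  obtain ⟨c, hc, L, hL, -, hD⟩ := h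
  intro l hl h0 hlD
  have hprime : Prime l := prime_of_isHomogeneous_one hl h0
  have hunit : IsUnit (C c : P2) := hc.isUnit.map C
  rw [hD, hunit.dvd_mul_left] at hlD
  obtain ⟨i, -, hi⟩ := hprime.exists_mem_finset_dvd hlD
  exact (hprime.dvd_of_dvd_pow hi).trans (hL i).2.2

/-- The linear form `a·x + b·y`, given by its coefficients; when nonzero, it vanishes exactly on the
line through `(b, -a)`. The factors of `D_ω` are written in this way. -/
def linearForm (a b : ℂ) : P2 := C a * X 0 + C b * X 1

theorem linearForm_isHomogeneous (a b : ℂ) : (linearForm a b).IsHomogeneous 1 :=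
  ((isHomogeneous_X ℂ 0).C_mul a).add ((isHomogeneous_X ℂ 1).C_mul b)

theorem eval_linearForm (a b : ℂ) (v : Fin 2 → ℂ) :
    eval v (linearForm a b) = a * v 0 + b * v 1 := by
  simp [linearForm]

theorem linearForm_ne_zero {a b : ℂ} (h : (a, b) ≠ 0) : linearForm a b ≠ 0 := by
  intro h0
  have ha : a = 0 := by simpa [eval_linearForm] using congrArg (eval ![1, 0]) h0
  have hb : b = 0 := by simpa [eval_linearForm] using congrArg (eval ![0, 1]) h0
  exact h (by simp [ha, hb])

theorem isRelPrime_linearForm_of_eval_ne_zero {a b : ℂ} (h : (a, b) ≠ 0) {p : P2}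
    (hp : eval ![b, -a] p ≠ 0) : IsRelPrime (linearForm a b) p := by
  have hprime := prime_of_isHomogeneous_one (linearForm_isHomogeneous a b) (linearForm_ne_zero h)
  refine isRelPrime_of_eval_ne_zero hprime.irreducible ?_ hp
  simp [eval_linearForm, mul_comm]

theorem not_proportional_linearForm {a b c d : ℂ} (h : a * d - b * c ≠ 0) :
    ¬ Proportional (linearForm a b) (linearForm c d) := by
  rintro ⟨t, ht | ht⟩
  · have hzero := congrArg (eval ![d, -c]) ht
    simp only [map_mul, eval_linearForm, Matrix.cons_val] at hzero
    exact h (by linear_combination hzero)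
  · have hzero := congrArg (eval ![b, -a]) ht
    simp only [map_mul, eval_linearForm, Matrix.cons_val] at hzero
    exact h (by linear_combination -hzero)

theorem hasType_ofFn {n : ℕ} {A B : P2} {k : Fin n → ℕ} {L : Fin n → P2} {c : ℂ} (hc : c ≠ 0)
    (hL : ∀ i, (L i).IsHomogeneous 1 ∧ L i ≠ 0 ∧ L i ∣ Cpoly A B)
    (hne : ∀ i j, i ≠ j → ¬ Proportional (L i) (L j))
    (hD : Dpoly A B = C c * ∏ i, L i ^ k i) : HasType A B (List.ofFn k) := by
  refine ⟨c, hc, fun i ↦ L (i.cast List.length_ofFn), fun i ↦ hL _, fun i j hij ↦ hne _ _ ?_, ?_⟩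
  · simpa using hij
  · rw [hD]
    congr 1
    exact (Fintype.prod_equiv (finCongr List.length_ofFn) _ _ fun _ ↦ by simp; rfl).symm

theorem hasType_ofFn_of_linearForm {n : ℕ} {A B : P2} (k : Fin n → ℕ) (v : Fin n → ℂ × ℂ)
    {c : ℂ} (hc : c ≠ 0) (E : P2) (hv : ∀ i, v i ≠ 0)
    (hdet : ∀ i j, i ≠ j → (v i).1 * (v j).2 - (v i).2 * (v j).1 ≠ 0)
    (hC : Cpoly A B = (∏ i, linearForm (v i).1 (v i).2) * E)
    (hD : Dpoly A B = C c * ∏ i, linearForm (v i).1 (v i).2 ^ k i) :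
    HasType A B (List.ofFn k) := by
  refine hasType_ofFn hc (fun i ↦ ⟨linearForm_isHomogeneous _ _, linearForm_ne_zero (hv i), ?_⟩)
    (fun i j hij ↦ not_proportional_linearForm (hdet i j hij)) hD
  exact hC ▸ (Finset.dvd_prod_of_mem _ (Finset.mem_univ i)).mul_right E

/-- The coefficient `y²(a·x² + b·xy + c·y²)` of `dx` in a family containing `ω₁, …, ω₅`. -/
def quarticA (a b c : ℂ) : P2 :=
  X 1 ^ 2 * (C a * X 0 ^ 2 + C b * X 0 * X 1 + C c * X 1 ^ 2)

/-- The coefficient `x³(d·x + e·y)` of `dy` in a family containing `ω₁, …, ω₅`. -/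
def quarticB (d e : ℂ) : P2 := X 0 ^ 3 * linearForm d e

theorem noCommonFactor_quartic {a b c d e : ℂ} (hc : c ≠ 0) (hd : d ≠ 0)
    (h : a * e ^ 2 - b * d * e + c * d ^ 2 ≠ 0) :
    NoCommonFactor (quarticA a b c) (quarticB d e) := by
  have hx : IsRelPrime (X 0) (quarticA a b c) :=
    isRelPrime_of_eval_ne_zero X_prime.irreducible (v := ![0, 1]) (by simp)
      (by simpa [quarticA] using hc)
  have hl : IsRelPrime (linearForm d e) (quarticA a b c) := by
    refine isRelPrime_linearForm_of_eval_ne_zero (by simp [hd]) ?_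
    have heval : eval ![e, -d] (quarticA a b c) =
        d ^ 2 * (a * e ^ 2 - b * d * e + c * d ^ 2) := by
      simp only [quarticA, map_mul, map_add, map_pow, eval_C, eval_X, Matrix.cons_val]
      ring
    exact heval ▸ mul_ne_zero (pow_ne_zero 2 hd) h
  exact fun p hA hB ↦ (hx.pow_left.mul_left hl) hB hA

theorem dpoly_quartic (a b c d e : ℂ) :
    Dpoly (quarticA a b c) (quarticB d e) = -4 * X 0 ^ 2 * X 1 *
      (2 * C a * C d * X 0 ^ 3 + (C a * C e + 3 * C b * C d) * X 0 ^ 2 * X 1 +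
        (2 * C b * C e + 4 * C c * C d) * X 0 * X 1 ^ 2 + 3 * C c * C e * X 1 ^ 3) := by
  have hAx : pderiv 0 (quarticA a b c) = X 1 ^ 2 * (2 * C a * X 0 + C b * X 1) := by
    simp only [quarticA, map_add, Derivation.leibniz, Derivation.leibniz_pow, pderiv_C,
      pderiv_X_self, pderiv_X_of_ne one_ne_zero, smul_eq_mul, nsmul_eq_mul, Nat.cast_ofNat]
    ring
  have hAy : pderiv 1 (quarticA a b c) =
      X 1 * (2 * C a * X 0 ^ 2 + 3 * C b * X 0 * X 1 + 4 * C c * X 1 ^ 2) := by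
    simp only [quarticA, map_add, Derivation.leibniz, Derivation.leibniz_pow, pderiv_C,
      pderiv_X_self, pderiv_X_of_ne zero_ne_one, smul_eq_mul, nsmul_eq_mul, Nat.cast_ofNat]
    ring
  have hBx : pderiv 0 (quarticB d e) = X 0 ^ 2 * (4 * C d * X 0 + 3 * C e * X 1) := by
    simp only [quarticB, linearForm, map_add, Derivation.leibniz, Derivation.leibniz_pow, pderiv_C,
      pderiv_X_self, pderiv_X_of_ne one_ne_zero, smul_eq_mul, nsmul_eq_mul, Nat.cast_ofNat]
    ring
  have hBy : pderiv 1 (quarticB d e) = C e * X 0 ^ 3 := by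
    simp only [quarticB, linearForm, map_add, Derivation.leibniz, Derivation.leibniz_pow, pderiv_C,
      pderiv_X_self, pderiv_X_of_ne zero_ne_one, smul_eq_mul, nsmul_eq_mul, Nat.cast_ofNat]
    ring
  rw [Dpoly, hAx, hAy, hBx, hBy]
  ring

theorem A1_eq_quarticA : A1 = quarticA 0 0 1 := by
  simp only [A1, quarticA, C_0, C_1]
  ring

theorem B1_eq_quarticB : B1 = quarticB (-1) 0 := by
  simp only [B1, quarticB, linearForm, C_neg, C_0, C_1]
  ring

theorem A2_eq_quarticA : A2 = quarticA 0 2 (-1) := by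
  simp only [A2, quarticA, C_neg, map_ofNat C, C_0, C_1]
  ring

theorem B2_eq_quarticB : B2 = quarticB 1 (-2) := by
  simp only [B2, quarticB, linearForm, C_neg, map_ofNat C, C_1]
  ring

theorem A3_eq_quarticA : A3 = quarticA 6 4 1 := by
  simp only [A3, quarticA, map_ofNat C, C_1]
  ring

theorem B3_eq_quarticB : B3 = quarticB (-1) (-4) := by
  simp only [B3, quarticB, linearForm, C_neg, map_ofNat C, C_1]
  ring

theorem A4_eq_quarticA : A4 = quarticA 0 4 1 := by
  simp only [A4, quarticA, map_ofNat C, C_0, C_1]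
  ring

theorem B4_eq_quarticB : B4 = quarticB 1 4 := by
  simp only [B4, quarticB, linearForm, map_ofNat C, C_1]
  ring

theorem A5_eq_quarticA : A5 = quarticA 6 4 1 := by
  simp only [A5, quarticA, map_ofNat C, C_1]
  ring

theorem B5_eq_quarticB : B5 = quarticB 3 0 := by
  simp only [B5, quarticB, linearForm, map_ofNat C, C_0]
  ring

theorem noCommonFactor_A1_B1 : NoCommonFactor A1 B1 := by
  rw [A1_eq_quarticA, B1_eq_quarticB]
  exact noCommonFactor_quartic (by norm_num) (by norm_num) (by norm_num)

theorem noCommonFactor_A2_B2 : NoCommonFactor A2 B2 := by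
  rw [A2_eq_quarticA, B2_eq_quarticB]
  exact noCommonFactor_quartic (by norm_num) (by norm_num) (by norm_num)

theorem noCommonFactor_A3_B3 : NoCommonFactor A3 B3 := by
  rw [A3_eq_quarticA, B3_eq_quarticB]
  exact noCommonFactor_quartic (by norm_num) (by norm_num) (by norm_num)

theorem noCommonFactor_A4_B4 : NoCommonFactor A4 B4 := by
  rw [A4_eq_quarticA, B4_eq_quarticB]
  exact noCommonFactor_quartic (by norm_num) (by norm_num) (by norm_num)

theorem noCommonFactor_A5_B5 : NoCommonFactor A5 B5 := by
  rw [A5_eq_quarticA, B5_eq_quarticB]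
  exact noCommonFactor_quartic (by norm_num) (by norm_num) (by norm_num)

theorem dpoly_A1_B1 : Dpoly A1 B1 = 16 * X 0 ^ 3 * X 1 ^ 3 := by
  rw [A1_eq_quarticA, B1_eq_quarticB, dpoly_quartic]
  simp only [C_neg, C_0, C_1]
  ring

theorem dpoly_A2_B2 : Dpoly A2 B2 = -24 * X 0 ^ 2 * X 1 ^ 2 * (X 0 - X 1) ^ 2 := by
  rw [A2_eq_quarticA, B2_eq_quarticB, dpoly_quartic]
  simp only [C_neg, map_ofNat C, C_0, C_1]
  ring

theorem dpoly_A3_B3 : Dpoly A3 B3 = 48 * X 0 ^ 2 * X 1 * (X 0 + X 1) ^ 3 := by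
  rw [A3_eq_quarticA, B3_eq_quarticB, dpoly_quartic]
  simp only [C_neg, map_ofNat C, C_1]
  ring

theorem dpoly_A4_B4 :
    Dpoly A4 B4 = -48 * X 0 ^ 2 * X 1 ^ 2 * (X 0 ^ 2 + 3 * X 0 * X 1 + X 1 ^ 2) := by
  rw [A4_eq_quarticA, B4_eq_quarticB, dpoly_quartic]
  simp only [map_ofNat C, C_0, C_1]
  ring

theorem dpoly_A5_B5 :
    Dpoly A5 B5 = -48 * X 0 ^ 3 * X 1 * (3 * X 0 ^ 2 + 3 * X 0 * X 1 + X 1 ^ 2) := by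
  rw [A5_eq_quarticA, B5_eq_quarticB, dpoly_quartic]
  simp only [map_ofNat C, C_0, C_1]
  ring

theorem cpoly_A1_B1 : Cpoly A1 B1 = X 0 * X 1 * (X 1 ^ 3 - X 0 ^ 3) := by
  simp only [Cpoly, A1, B1]
  ring

theorem cpoly_A2_B2 : Cpoly A2 B2 = X 0 * X 1 * (X 0 - X 1) * (X 0 ^ 2 - X 0 * X 1 + X 1 ^ 2) := by
  simp only [Cpoly, A2, B2]
  ring

theorem cpoly_A3_B3 :
    Cpoly A3 B3 = X 0 * X 1 * (X 0 + X 1) * (X 1 ^ 2 + 3 * X 0 * X 1 - X 0 ^ 2) := by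
  simp only [Cpoly, A3, B3]
  ring

theorem cpoly_A4_B4 :
    Cpoly A4 B4 = X 0 * X 1 * (X 0 + X 1) * (X 0 ^ 2 + 3 * X 0 * X 1 + X 1 ^ 2) := by
  simp only [Cpoly, A4, B4]
  ring

theorem cpoly_A5_B5 :
    Cpoly A5 B5 = X 0 * X 1 * (X 0 + X 1) * (3 * X 0 ^ 2 + 3 * X 0 * X 1 + X 1 ^ 2) := by
  simp only [Cpoly, A5, B5]
  ring

theorem hasType_A1_B1 : HasType A1 B1 [3, 3] := by
  refine hasType_ofFn_of_linearForm ![3, 3] ![(1, 0), (0, 1)] (c := 16)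
    (by norm_num) (X 1 ^ 3 - X 0 ^ 3) (by simp [Fin.forall_fin_succ])
    (by simp [Fin.forall_fin_succ]) ?_ ?_
  · rw [cpoly_A1_B1, Fin.prod_univ_two]
    simp only [linearForm, Matrix.cons_val, C_0, C_1]
    ring
  · rw [dpoly_A1_B1, Fin.prod_univ_two]
    simp only [linearForm, Matrix.cons_val, C_0, C_1, map_ofNat C]
    ring

theorem hasType_A2_B2 : HasType A2 B2 [2, 2, 2] := by
  refine hasType_ofFn_of_linearForm ![2, 2, 2] ![(1, 0), (0, 1), (1, -1)] (c := -24)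
    (by norm_num) (X 0 ^ 2 - X 0 * X 1 + X 1 ^ 2) (by simp [Fin.forall_fin_succ])
    (by simp [Fin.forall_fin_succ]) ?_ ?_
  · rw [cpoly_A2_B2, Fin.prod_univ_three]
    simp only [linearForm, Matrix.cons_val, C_0, C_1, C_neg]
    ring
  · rw [dpoly_A2_B2, Fin.prod_univ_three]
    simp only [linearForm, Matrix.cons_val, C_0, C_1, C_neg, map_ofNat C]
    ring

theorem hasType_A3_B3 : HasType A3 B3 [1, 2, 3] := by
  refine hasType_ofFn_of_linearForm ![1, 2, 3] ![(0, 1), (1, 0), (1, 1)] (c := 48)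
    (by norm_num) (X 1 ^ 2 + 3 * X 0 * X 1 - X 0 ^ 2) (by simp [Fin.forall_fin_succ])
    (by simp [Fin.forall_fin_succ]) ?_ ?_
  · rw [cpoly_A3_B3, Fin.prod_univ_three]
    simp only [linearForm, Matrix.cons_val, C_0, C_1]
    ring
  · rw [dpoly_A3_B3, Fin.prod_univ_three]
    simp only [linearForm, Matrix.cons_val, C_0, C_1, map_ofNat C]
    ring

theorem hasType_A4_B4 : HasType A4 B4 [1, 1, 2, 2] := by
  obtain ⟨a, b, ha, hb, hab, hfactor⟩ :=
    exists_binary_quadratic_eq_mul (σ := Fin 2) (p := 3) (q := (1 : ℂ))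
      (by norm_num) (by norm_num)
  have hquad : (X 0 ^ 2 + 3 * X 0 * X 1 + X 1 ^ 2 : P2) =
      (X 0 + C a * X 1) * (X 0 + C b * X 1) := by
    simpa [map_ofNat C] using hfactor (X 0) (X 1)
  refine hasType_ofFn_of_linearForm ![1, 1, 2, 2] ![(1, a), (1, b), (1, 0), (0, 1)] (c := -48)
    (by norm_num) (X 0 + X 1) (by simp [Fin.forall_fin_succ])
    (by simp [Fin.forall_fin_succ, ha, hb, ha.symm, hb.symm, sub_ne_zero, hab, hab.symm]) ?_ ?_
  · rw [cpoly_A4_B4, hquad, Fin.prod_univ_four]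
    simp only [linearForm, Matrix.cons_val, C_0, C_1]
    ring
  · rw [dpoly_A4_B4, hquad, Fin.prod_univ_four]
    simp only [linearForm, Matrix.cons_val, C_0, C_1, C_neg, map_ofNat C]
    ring

theorem hasType_A5_B5 : HasType A5 B5 [1, 1, 1, 3] := by
  obtain ⟨a, b, ha, hb, hab, hfactor⟩ :=
    exists_binary_quadratic_eq_mul (σ := Fin 2) (p := 3) (q := (3 : ℂ))
      (by norm_num) (by norm_num)
  have hquad : (3 * X 0 ^ 2 + 3 * X 0 * X 1 + X 1 ^ 2 : P2) =
      (X 1 + C a * X 0) * (X 1 + C b * X 0) := by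
    rw [← hfactor (X 1) (X 0), map_ofNat C]
    ring
  refine hasType_ofFn_of_linearForm ![1, 1, 1, 3] ![(a, 1), (b, 1), (0, 1), (1, 0)] (c := -48)
    (by norm_num) (X 0 + X 1) (by simp [Fin.forall_fin_succ])
    (by simp [Fin.forall_fin_succ, ha, hb, ha.symm, hb.symm, sub_ne_zero, hab, hab.symm]) ?_ ?_
  · rw [cpoly_A5_B5, hquad, Fin.prod_univ_four]
    simp only [linearForm, Matrix.cons_val, C_0, C_1]
    ring
  · rw [dpoly_A5_B5, hquad, Fin.prod_univ_four]
    simp only [linearForm, Matrix.cons_val, C_0, C_1, C_neg, map_ofNat C]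
    ring

/-- Each of the five pairs `(Aᵢ, Bᵢ)` is coprime; the stated identities for `Dᵢ` and `Cᵢ`
hold; in particular every linear factor of `Dᵢ` divides `Cᵢ`, so each `ωᵢ` defines a convex
homogeneous foliation of degree 4, of respective types
`2·R₃`, `3·R₂`, `1·R₁+1·R₂+1·R₃`, `2·R₁+2·R₂`, `3·R₁+1·R₃`. -/
theorem omegas_identities_and_types :
    (NoCommonFactor A1 B1 ∧
      Dpoly A1 B1 = 16 * X 0 ^ 3 * X 1 ^ 3 ∧
      Cpoly A1 B1 = X 0 * X 1 * (X 1 ^ 3 - X 0 ^ 3) ∧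
      IsConvexPair A1 B1 ∧ HasType A1 B1 [3, 3]) ∧
    (NoCommonFactor A2 B2 ∧
      Dpoly A2 B2 = -24 * X 0 ^ 2 * X 1 ^ 2 * (X 0 - X 1) ^ 2 ∧
      Cpoly A2 B2 = X 0 * X 1 * (X 0 - X 1) * (X 0 ^ 2 - X 0 * X 1 + X 1 ^ 2) ∧
      IsConvexPair A2 B2 ∧ HasType A2 B2 [2, 2, 2]) ∧
    (NoCommonFactor A3 B3 ∧
      Dpoly A3 B3 = 48 * X 0 ^ 2 * X 1 * (X 0 + X 1) ^ 3 ∧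
      Cpoly A3 B3 = X 0 * X 1 * (X 0 + X 1) * (X 1 ^ 2 + 3 * X 0 * X 1 - X 0 ^ 2) ∧
      IsConvexPair A3 B3 ∧ HasType A3 B3 [1, 2, 3]) ∧
    (NoCommonFactor A4 B4 ∧
      Dpoly A4 B4 = -48 * X 0 ^ 2 * X 1 ^ 2 * (X 0 ^ 2 + 3 * X 0 * X 1 + X 1 ^ 2) ∧
      Cpoly A4 B4 = X 0 * X 1 * (X 0 + X 1) * (X 0 ^ 2 + 3 * X 0 * X 1 + X 1 ^ 2) ∧
      IsConvexPair A4 B4 ∧ HasType A4 B4 [1, 1, 2, 2]) ∧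
    (NoCommonFactor A5 B5 ∧
      Dpoly A5 B5 = -48 * X 0 ^ 3 * X 1 * (3 * X 0 ^ 2 + 3 * X 0 * X 1 + X 1 ^ 2) ∧
      Cpoly A5 B5 = X 0 * X 1 * (X 0 + X 1) * (3 * X 0 ^ 2 + 3 * X 0 * X 1 + X 1 ^ 2) ∧
      IsConvexPair A5 B5 ∧ HasType A5 B5 [1, 1, 1, 3]) :=
  ⟨⟨noCommonFactor_A1_B1, dpoly_A1_B1, cpoly_A1_B1, hasType_A1_B1.isConvexPair,
      hasType_A1_B1⟩,
    ⟨noCommonFactor_A2_B2, dpoly_A2_B2, cpoly_A2_B2, hasType_A2_B2.isConvexPair,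
      hasType_A2_B2⟩,
    ⟨noCommonFactor_A3_B3, dpoly_A3_B3, cpoly_A3_B3, hasType_A3_B3.isConvexPair,
      hasType_A3_B3⟩,
    ⟨noCommonFactor_A4_B4, dpoly_A4_B4, cpoly_A4_B4, hasType_A4_B4.isConvexPair,
      hasType_A4_B4⟩,
    ⟨noCommonFactor_A5_B5, dpoly_A5_B5, cpoly_A5_B5, hasType_A5_B5.isConvexPair,
      hasType_A5_B5⟩⟩
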